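/- arXiv:2003.06138 — 2 statements merged into one kernel-verified Lean document; each statement's English description precedes it below -/
import Mathlib

section
/- Fix (x̄,ȳ) ∈ gph S at which S is inner semicontinuous. Assume that f and g₁,…,g_q are locally Lipschitz continuous and continuously differentiable with respect to y in a neighbourhood of (x̄,ȳ). Let I(x̄,ȳ) = { i ∈ {1,…,q} | g_i(x̄,ȳ) = 0 } and set ∇_y g₀(x,y) := ∇_y f(x,y) (the y-gradient of g₀(x,y) = f(x,y) − φ(x)). Assume there is a neighbourhood U ⊆ ℝⁿ×ℝᵐ of (x̄,ȳ) such that for each index set J ⊆ I(x̄,ȳ) ∪ {0}, the family of gradients (∇_y g_i(x,y))_{i∈J} has constant rank on U (i.e., the dimension of the span of { ∇_y g_i(x,y) | i ∈ J } is the same for all (x,y) ∈ U). Then the R-regularity constraint qualification (RRCQ) holds at (x̄,ȳ). -/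
open Filter Topology
open scoped ENNReal NNReal

/-- Optimal value function `φ(x) = inf { f(x,y) | g(x,y) ≤ 0 }`, an extended real. -/
noncomputable def phi {n m q : ℕ} (f : (Fin n → ℝ) → (Fin m → ℝ) → ℝ)
    (g : (Fin n → ℝ) → (Fin m → ℝ) → Fin q → ℝ) (x : Fin n → ℝ) : EReal :=
  sInf {v : EReal | ∃ y : Fin m → ℝ, (∀ i, g x y i ≤ 0) ∧ v = ((f x y : ℝ) : EReal)}

/-- Lower level solution set `S(x) = argmin_y { f(x,y) | g(x,y) ≤ 0 }`. -/
def Sol {n m q : ℕ} (f : (Fin n → ℝ) → (Fin m → ℝ) → ℝ)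
    (g : (Fin n → ℝ) → (Fin m → ℝ) → Fin q → ℝ) (x : Fin n → ℝ) : Set (Fin m → ℝ) :=
  {y | (∀ i, g x y i ≤ 0) ∧ ∀ z, (∀ i, g x z i ≤ 0) → f x y ≤ f x z}

/-- `(x̄,ȳ)` is a local minimizer of (BPP). -/
def IsLocalMinBPP {n m q : ℕ} (F : (Fin n → ℝ) → (Fin m → ℝ) → ℝ)
    (X : Set (Fin n → ℝ)) (f : (Fin n → ℝ) → (Fin m → ℝ) → ℝ)
    (g : (Fin n → ℝ) → (Fin m → ℝ) → Fin q → ℝ)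
    (xb : Fin n → ℝ) (yb : Fin m → ℝ) : Prop :=
  xb ∈ X ∧ yb ∈ Sol f g xb ∧
    ∃ ε : ℝ, 0 < ε ∧ ∀ x y, dist x xb < ε → dist y yb < ε → x ∈ X → y ∈ Sol f g x →
      F xb yb ≤ F x y

/-- (BPP) is partially calm at `(x̄,ȳ)`. -/
def PartiallyCalm {n m q : ℕ} (F : (Fin n → ℝ) → (Fin m → ℝ) → ℝ)
    (X : Set (Fin n → ℝ)) (f : (Fin n → ℝ) → (Fin m → ℝ) → ℝ)
    (g : (Fin n → ℝ) → (Fin m → ℝ) → Fin q → ℝ)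
    (xb : Fin n → ℝ) (yb : Fin m → ℝ) : Prop :=
  ∃ δ : ℝ, 0 < δ ∧ ∃ κ : ℝ, 0 < κ ∧ ∀ (x : Fin n → ℝ) (y : Fin m → ℝ) (u : ℝ),
    dist x xb ≤ δ → dist y yb ≤ δ → |u| ≤ δ → x ∈ X →
    ((f x y : ℝ) : EReal) - phi f g x ≤ ((u : ℝ) : EReal) → (∀ i, g x y i ≤ 0) →
    F xb yb ≤ F x y + κ * |u|

/-- The R-regularity constraint qualification (RRCQ) at `(x̄,ȳ) ∈ gph S`:
`dist(y,Φ(x)) ≤ κ·max{0, f(x,y) − φ(x), g₁(x,y), …, g_q(x,y)}` for all `(x,y)` near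
`(x̄,ȳ)` with `Φ(x) ≠ ∅` (note `Φ(x) = S(x)`, so that `φ(x)` is finite there). -/
def RRCQ {n m q : ℕ} (f : (Fin n → ℝ) → (Fin m → ℝ) → ℝ)
    (g : (Fin n → ℝ) → (Fin m → ℝ) → Fin q → ℝ)
    (xb : Fin n → ℝ) (yb : Fin m → ℝ) : Prop :=
  ∃ κ : ℝ, 0 < κ ∧ ∃ ε : ℝ, 0 < ε ∧ ∀ (x : Fin n → ℝ) (y : Fin m → ℝ),
    dist x xb < ε → dist y yb < ε → (Sol f g x).Nonempty →
    Metric.infDist y (Sol f g x) ≤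
      κ * max (max 0 (f x y - (phi f g x).toReal))
        (Finset.univ.fold max 0 fun i => g x y i)

/-- Inner semicontinuity of a set-valued map at a point of its graph. -/
def InnerSemicontinuous {n m : ℕ} (S : (Fin n → ℝ) → Set (Fin m → ℝ))
    (xb : Fin n → ℝ) (yb : Fin m → ℝ) : Prop :=
  ∀ x : ℕ → (Fin n → ℝ), Tendsto x atTop (𝓝 xb) →
    ∃ y : ℕ → (Fin m → ℝ), Tendsto y atTop (𝓝 yb) ∧
      ∀ᶠ k in atTop, y k ∈ S (x k)

/-- The `y`-gradient family indexed by `Option (Fin q)`, where `none` stands for the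
index `0`, i.e. the function `g₀(x,y) = f(x,y) − φ(x)` whose `y`-gradient is `∇_y f(x,y)`. -/
noncomputable def yGrad {n m q : ℕ} (f : (Fin n → ℝ) → (Fin m → ℝ) → ℝ)
    (g : (Fin n → ℝ) → (Fin m → ℝ) → Fin q → ℝ)
    (p : (Fin n → ℝ) × (Fin m → ℝ)) (io : Option (Fin q)) : (Fin m → ℝ) →L[ℝ] ℝ :=
  io.elim (fderiv ℝ (f p.1) p.2) (fun j => fderiv ℝ (fun y => g p.1 y j) p.2)

/-!
Near `(x̄,ȳ)`, inner semicontinuity supplies a solution `y' ∈ S(x)` close to a given point `y`, so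
that `S(x)` is locally described by the system `h ≤ 0` with functions `f(x,·) − f(x,y')` and the
active `gᵢ(x,·)`; the other constraints hold by continuity. Let `M ≥ 0` bound `h` at `y`. On a
closed ball around `y`, minimise `‖w − y‖ + ρ ∑ max(0, hᵢ(w))²` over `w`. At an interior minimiser
`w` the derivative `D` of the penalty is a conic combination of gradients of violated constraints,
and stationarity says `‖D‖ ≤ 1` and `‖y − w‖ ≤ D(y − w)`. By Carathéodory's theorem for cones the
gradients in `D` can be taken linearly independent; constant rank makes them independent already at
`(x̄,ȳ)`, so the coefficients sum to at most a fixed constant `C`. As `hᵢ(w) > 0`, linearisation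
gives `∇hᵢ(w)(y − w) ≤ M + ‖y − w‖ / (2C)`, hence `‖y − w‖ ≤ 2CM`. This bound does not depend on
`ρ`, and `ρ → ∞` yields a point of `S(x)` within `2CM` of `y`.
-/

section ConicCombinations

variable {ι 𝕜 F : Type*} [Field 𝕜] [LinearOrder 𝕜] [IsStrictOrderedRing 𝕜] [AddCommGroup F]
  [Module 𝕜 F] {a : ι → F}

lemma exists_sum_smul_eq_zero_of_not_linearIndepOn {s : Finset ι} (hs : ¬LinearIndepOn 𝕜 a s) :
    ∃ c : ι → 𝕜, ∑ i ∈ s, c i • a i = 0 ∧ ∃ i ∈ s, 0 < c i := by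
  obtain ⟨c, hc, j, hj, hcj⟩ := not_linearIndepOn_finset_iff.mp hs
  rcases hcj.lt_or_gt with hneg | hpos
  · exact ⟨-c, by simp [hc], j, hj, neg_pos.mpr hneg⟩
  · exact ⟨c, hc, j, hj, hpos⟩

lemma exists_conic_sum_erase_of_not_linearIndepOn [DecidableEq ι] {s : Finset ι} {l : ι → 𝕜}
    (hl : ∀ i ∈ s, 0 ≤ l i) (hs : ¬LinearIndepOn 𝕜 a s) :
    ∃ k ∈ s, ∃ μ : ι → 𝕜, (∀ i ∈ s.erase k, 0 ≤ μ i) ∧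
      ∑ i ∈ s.erase k, μ i • a i = ∑ i ∈ s, l i • a i := by
  obtain ⟨c, hc, j, hj, hcj⟩ := exists_sum_smul_eq_zero_of_not_linearIndepOn hs
  obtain ⟨k, hk, hmin⟩ := {i ∈ s | 0 < c i}.exists_min_image (fun i => l i / c i)
    ⟨j, Finset.mem_filter.mpr ⟨hj, hcj⟩⟩
  obtain ⟨hks, hck⟩ := Finset.mem_filter.mp hk
  refine ⟨k, hks, fun i => l i - l k / c k * c i, fun i hi => ?_, ?_⟩
  · have his := Finset.mem_of_mem_erase hi
    rw [sub_nonneg]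
    rcases lt_or_ge 0 (c i) with hpos | hnonpos
    · exact (le_div_iff₀ hpos).mp (hmin i (Finset.mem_filter.mpr ⟨his, hpos⟩))
    · exact (mul_nonpos_of_nonneg_of_nonpos (div_nonneg (hl k hks) hck.le) hnonpos).trans (hl i his)
  · have hzero : l k - l k / c k * c k = 0 := by rw [div_mul_cancel₀ _ hck.ne', sub_self]
    rw [Finset.sum_erase _ (by simp only [hzero, zero_smul])]
    simp only [sub_smul, mul_smul, Finset.sum_sub_distrib, ← Finset.smul_sum, hc, smul_zero,
      sub_zero]

theorem exists_linearIndepOn_conic_sum_eq (s : Finset ι) (l : ι → 𝕜) (hl : ∀ i ∈ s, 0 ≤ l i) :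
    ∃ t ⊆ s, LinearIndepOn 𝕜 a t ∧ ∃ μ : ι → 𝕜, (∀ i ∈ t, 0 ≤ μ i) ∧
      ∑ i ∈ t, μ i • a i = ∑ i ∈ s, l i • a i := by
  classical
  induction s using Finset.strongInduction generalizing l with
  | H s ih =>
    by_cases hs : LinearIndepOn 𝕜 a s
    · exact ⟨s, subset_rfl, hs, l, hl, rfl⟩
    · obtain ⟨k, hk, ν, hν, hνsum⟩ := exists_conic_sum_erase_of_not_linearIndepOn hl hs
      obtain ⟨t, hts, ht, μ, hμ, hμsum⟩ := ih _ (Finset.erase_ssubset hk) ν hν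
      exact ⟨t, hts.trans (Finset.erase_subset _ _), ht, μ, hμ, hμsum.trans hνsum⟩

end ConicCombinations

section CoefficientBounds

variable {ι F : Type*} [NormedAddCommGroup F] [NormedSpace ℝ F]

lemma exists_sum_abs_le_mul_norm_of_linearIndepOn {a : ι → F} {J : Finset ι}
    (hJ : LinearIndepOn ℝ a J) :
    ∃ C : ℝ, 0 ≤ C ∧ ∀ l : ι → ℝ, ∑ i ∈ J, |l i| ≤ C * ‖∑ i ∈ J, l i • a i‖ := by
  let T : (J → ℝ) →ₗ[ℝ] F := Fintype.linearCombination ℝ (fun i : J => a i)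
  obtain ⟨K, -, hK⟩ := T.exists_antilipschitzWith
    (LinearMap.ker_eq_bot.mpr (LinearIndependent.fintypeLinearCombination_injective hJ))
  refine ⟨J.card * K, by positivity, fun l => ?_⟩
  have hT : T (fun i => l i) = ∑ i ∈ J, l i • a i := Finset.sum_coe_sort J (fun i => l i • a i)
  have hsup : ‖fun i : J => l i‖ ≤ K * ‖∑ i ∈ J, l i • a i‖ := by
    simpa only [map_zero, dist_zero_right, hT] using hK.le_mul_dist (fun i : J => l i) 0
  calc ∑ i ∈ J, |l i| ≤ ∑ _i ∈ J, K * ‖∑ i ∈ J, l i • a i‖ :=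
        Finset.sum_le_sum fun i hi => (norm_le_pi_norm (fun i : J => l i) ⟨i, hi⟩).trans hsup
    _ = J.card * K * ‖∑ i ∈ J, l i • a i‖ := by rw [Finset.sum_const, nsmul_eq_mul, mul_assoc]

lemma sum_abs_le_two_mul_mul_norm_of_perturbation {a b : ι → F} {J : Finset ι} {l : ι → ℝ} {C : ℝ}
    (hC : 0 ≤ C) (hab : ∀ i ∈ J, C * ‖a i - b i‖ ≤ 1 / 2)
    (hl : ∑ i ∈ J, |l i| ≤ C * ‖∑ i ∈ J, l i • a i‖) :
    ∑ i ∈ J, |l i| ≤ 2 * C * ‖∑ i ∈ J, l i • b i‖ := by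
  have hsplit : ∑ i ∈ J, l i • a i = ∑ i ∈ J, l i • b i + ∑ i ∈ J, l i • (a i - b i) := by
    simp only [smul_sub, Finset.sum_sub_distrib, add_sub_cancel]
  have herror : C * ‖∑ i ∈ J, l i • (a i - b i)‖ ≤ (∑ i ∈ J, |l i|) / 2 :=
    calc C * ‖∑ i ∈ J, l i • (a i - b i)‖ ≤ C * ∑ i ∈ J, ‖l i • (a i - b i)‖ := by
          gcongr; exact norm_sum_le _ _
      _ = ∑ i ∈ J, |l i| * (C * ‖a i - b i‖) := by
          simp only [norm_smul, Real.norm_eq_abs, Finset.mul_sum, mul_left_comm]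
      _ ≤ ∑ i ∈ J, |l i| * (1 / 2) := by gcongr with i hi; exact hab i hi
      _ = (∑ i ∈ J, |l i|) / 2 := by rw [← Finset.sum_mul, mul_one_div]
  have hnorm : C * ‖∑ i ∈ J, l i • a i‖ ≤
      C * ‖∑ i ∈ J, l i • b i‖ + C * ‖∑ i ∈ J, l i • (a i - b i)‖ := by
    rw [hsplit, ← mul_add]
    gcongr
    exact norm_add_le _ _
  linarith

/-- `C` bounds the `ℓ¹`-norm of the coefficients of every linear combination of vectors of the
family `a` by the norm of that combination, uniformly over the linearly independent
subfamilies. -/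
def IndepCoeffBound (C : ℝ) (a : ι → F) : Prop :=
  ∀ J : Finset ι, LinearIndepOn ℝ a J →
    ∀ l : ι → ℝ, ∑ i ∈ J, |l i| ≤ C * ‖∑ i ∈ J, l i • a i‖

lemma eventually_sum_abs_le_mul_norm_of_linearIndepOn {a : ι → F} {J : Finset ι}
    (hJ : LinearIndepOn ℝ a J) :
    ∀ᶠ C : ℝ in atTop, ∀ᶠ b in 𝓝 a,
      ∀ l : ι → ℝ, ∑ i ∈ J, |l i| ≤ C * ‖∑ i ∈ J, l i • b i‖ := by
  obtain ⟨K, hK, hbound⟩ := exists_sum_abs_le_mul_norm_of_linearIndepOn hJ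
  have hnear : ∀ᶠ b in 𝓝 a, ∀ i ∈ J, K * ‖a i - b i‖ ≤ 1 / 2 := by
    refine (eventually_all_finset J).mpr fun i _ => ?_
    have hcont : Continuous fun b : ι → F => K * ‖a i - b i‖ := by fun_prop
    exact hcont.continuousAt.eventually_le_const (by simp)
  filter_upwards [eventually_ge_atTop (2 * K)] with C hC
  filter_upwards [hnear] with b hb l
  exact (sum_abs_le_two_mul_mul_norm_of_perturbation hK hb (hbound l)).trans (by gcongr)

theorem eventually_indepCoeffBound [Finite ι] (a : ι → F) :
    ∀ᶠ C : ℝ in atTop, ∀ᶠ b in 𝓝 a,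
      (∀ J : Set ι, LinearIndepOn ℝ b J → LinearIndepOn ℝ a J) → IndepCoeffBound C b := by
  have hJ : ∀ᶠ C : ℝ in atTop, ∀ J : Finset ι, ∀ᶠ b in 𝓝 a, LinearIndepOn ℝ a J →
      ∀ l : ι → ℝ, ∑ i ∈ J, |l i| ≤ C * ‖∑ i ∈ J, l i • b i‖ := by
    refine eventually_all.mpr fun J => ?_
    by_cases hJ : LinearIndepOn ℝ a J
    · filter_upwards [eventually_sum_abs_le_mul_norm_of_linearIndepOn hJ] with C hC
      filter_upwards [hC] with b hb _ using hb
    · exact .of_forall fun _ => .of_forall fun _ h => absurd h hJ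
  filter_upwards [hJ] with C hC
  filter_upwards [eventually_all.mpr hC] with b hb hindep J hbJ
  exact hb J (hindep J hbJ)

lemma IndepCoeffBound.exists_conic_sum_eq {C : ℝ} {a : ι → F} (ha : IndepCoeffBound C a)
    {s : Finset ι} {l : ι → ℝ} (hl : ∀ i ∈ s, 0 ≤ l i) :
    ∃ t ⊆ s, ∃ μ : ι → ℝ, (∀ i ∈ t, 0 ≤ μ i) ∧ ∑ i ∈ t, μ i • a i = ∑ i ∈ s, l i • a i ∧
      ∑ i ∈ t, μ i ≤ C * ‖∑ i ∈ s, l i • a i‖ := by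
  obtain ⟨t, hts, ht, μ, hμ, hsum⟩ := exists_linearIndepOn_conic_sum_eq (a := a) s l hl
  refine ⟨t, hts, μ, hμ, hsum, ?_⟩
  calc ∑ i ∈ t, μ i = ∑ i ∈ t, |μ i| :=
        Finset.sum_congr rfl fun i hi => (abs_of_nonneg (hμ i hi)).symm
    _ ≤ C * ‖∑ i ∈ t, μ i • a i‖ := ha t ht μ
    _ = C * ‖∑ i ∈ s, l i • a i‖ := by rw [hsum]

end CoefficientBounds

section ConstantRank

variable {ι Y K F : Type*} [TopologicalSpace Y] [Field K] [AddCommGroup F] [Module K F]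

variable (K) in
/-- The constant rank condition: each subfamily of the family `a y` of vectors, depending on a
parameter `y`, has locally constant rank at `y₀`. The rank is a `finrank`, so it is the true one
only for subfamilies with finite-dimensional span. -/
def HasConstantRankAt (a : Y → ι → F) (y₀ : Y) : Prop :=
  ∀ J : Set ι, ∀ᶠ y in 𝓝 y₀,
    Module.finrank K (Submodule.span K (a y '' J)) =
      Module.finrank K (Submodule.span K (a y₀ '' J))

lemma linearIndepOn_iff_card_eq_finrank_span {v : ι → F} {J : Set ι} [Fintype J] :
    LinearIndepOn K v J ↔ Fintype.card J = Module.finrank K (Submodule.span K (v '' J)) := by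
  rw [Set.image_eq_range]
  exact linearIndependent_iff_card_eq_finrank_span

lemma HasConstantRankAt.eventually_linearIndepOn [Finite ι] {a : Y → ι → F} {y₀ : Y}
    (ha : HasConstantRankAt K a y₀) :
    ∀ᶠ y in 𝓝 y₀, ∀ J : Set ι, LinearIndepOn K (a y) J → LinearIndepOn K (a y₀) J := by
  refine eventually_all.mpr fun J => ?_
  have := Fintype.ofFinite J
  filter_upwards [ha J] with y hy hindep
  rwa [linearIndepOn_iff_card_eq_finrank_span, ← hy, ← linearIndepOn_iff_card_eq_finrank_span]

lemma hasConstantRankAt_restrict_of_finrank_eq {a : Y → ι → F} {y₀ : Y} {s : Set ι} {U : Set Y}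
    (hU : U ∈ 𝓝 y₀) (hrank : ∀ J ⊆ s, ∃ r : ℕ, ∀ y ∈ U,
      Module.finrank K (Submodule.span K (a y '' J)) = r) :
    HasConstantRankAt K (fun y (i : s) => a y i) y₀ := by
  intro J
  obtain ⟨r, hr⟩ := hrank (Subtype.val '' J) (Subtype.coe_image_subset s J)
  have himage (y : Y) : (fun i : s => a y i) '' J = a y '' (Subtype.val '' J) :=
    Set.image_comp (a y) Subtype.val J
  filter_upwards [hU] with y hy
  rw [himage, himage, hr y hy, hr y₀ (mem_of_mem_nhds hU)]

end ConstantRank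

section FirstOrderConditions

variable {E : Type*} [NormedAddCommGroup E] [NormedSpace ℝ E]

lemma hasDerivAt_max_zero_sq (t : ℝ) : HasDerivAt (fun s : ℝ => max 0 s ^ 2) (2 * max 0 t) t := by
  rw [hasDerivAt_iff_isLittleO]
  have hquadratic : (fun s : ℝ => max 0 s ^ 2 - max 0 t ^ 2 - (s - t) • (2 * max 0 t)) =O[𝓝 t]
      fun s => ‖s - t‖ ^ 2 := by
    refine Asymptotics.IsBigO.of_bound' (.of_forall fun s => ?_)
    rw [norm_pow, norm_norm, Real.norm_eq_abs, Real.norm_eq_abs, sq_abs, smul_eq_mul, abs_le]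
    rcases le_total 0 s with hs | hs <;> rcases le_total 0 t with ht | ht <;>
      simp only [max_eq_left, max_eq_right, hs, ht] <;> constructor <;> nlinarith
  exact hquadratic.trans_isLittleO (Asymptotics.isLittleO_pow_sub_sub t one_lt_two)

lemma le_add_apply_of_isLocalMin_convexOn_add {N P : E → ℝ} {D : E →L[ℝ] ℝ} {w : E}
    (hN : ConvexOn ℝ Set.univ N) (hP : HasFDerivAt P D w)
    (hmin : IsLocalMin (fun v => N v + P v) w) (z : E) : N w ≤ N z + D (z - w) := by
  have hslope : Tendsto (fun t : ℝ => t⁻¹ • (P (w + t • (z - w)) - P w)) (𝓝[>] 0)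
      (𝓝 (D (z - w))) := (hP.hasLineDerivAt (z - w)).tendsto_slope_zero_right
  have hmin' : ∀ᶠ t : ℝ in 𝓝[>] 0, N w + P w ≤ N (w + t • (z - w)) + P (w + t • (z - w)) := by
    have hline : Tendsto (fun t : ℝ => w + t • (z - w)) (𝓝[>] 0) (𝓝 w) :=
      (Continuous.tendsto' (by fun_prop) 0 w (by simp)).mono_left nhdsWithin_le_nhds
    exact hline.eventually hmin
  have hle : N w - N z ≤ D (z - w) := by
    refine ge_of_tendsto hslope ?_
    filter_upwards [hmin', Ioo_mem_nhdsGT one_pos] with t ht ⟨ht0, ht1⟩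
    have hconv : N (w + t • (z - w)) ≤ (1 - t) * N w + t * N z := by
      have hpoint : w + t • (z - w) = (1 - t) • w + t • z := by module
      rw [hpoint]
      exact hN.2 trivial trivial (sub_nonneg.mpr ht1.le) ht0.le (sub_add_cancel 1 t)
    rw [smul_eq_mul, le_inv_mul_iff₀ ht0]
    linarith
  linarith

lemma norm_le_one_and_norm_sub_le_of_isLocalMin_norm_sub_add {P : E → ℝ} {D : E →L[ℝ] ℝ}
    {w y : E} (hP : HasFDerivAt P D w) (hmin : IsLocalMin (fun v => ‖v - y‖ + P v) w) :
    ‖D‖ ≤ 1 ∧ ‖y - w‖ ≤ D (y - w) := by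
  have hconvex : ConvexOn ℝ Set.univ fun v => ‖v - y‖ := by
    simpa only [dist_eq_norm] using convexOn_univ_dist y
  have hsub := le_add_apply_of_isLocalMin_convexOn_add hconvex hP hmin
  refine ⟨D.opNorm_le_bound zero_le_one fun u => ?_, ?_⟩
  · have hneg (v : E) : -D v ≤ ‖v‖ := by
      have hv := hsub (w + v)
      rw [add_sub_cancel_left, add_sub_right_comm] at hv
      linarith [norm_add_le (w - y) v]
    rw [one_mul, Real.norm_eq_abs, abs_le']
    exact ⟨by simpa using hneg (-u), hneg u⟩
  · simpa [norm_sub_rev] using hsub y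

end FirstOrderConditions

lemma exists_mem_nonpos_of_forall_nat_mul_le {X : Type*} [TopologicalSpace X] {K : Set X}
    (hK : IsCompact K) {P : X → ℝ} (hP : ContinuousOn P K) {Q : ℝ}
    (hQ : ∀ k : ℕ, ∃ w ∈ K, k * P w ≤ Q) : ∃ w ∈ K, P w ≤ 0 := by
  obtain ⟨v, hv, -⟩ := hQ 0
  obtain ⟨w, hw, hmin⟩ := hK.exists_isMinOn ⟨v, hv⟩ hP
  refine ⟨w, hw, le_of_not_gt fun hpos => ?_⟩
  obtain ⟨k, hk⟩ := exists_nat_gt (Q / P w)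
  obtain ⟨u, hu, huQ⟩ := hQ k
  have hle : (k : ℝ) * P w ≤ Q := (by gcongr; exact hmin hu : _ ≤ k * P u).trans huQ
  exact ((div_lt_iff₀ hpos).mp hk).not_ge hle

lemma norm_sub_sub_apply_le_of_norm_fderiv_sub_le {E F : Type*} [NormedAddCommGroup E]
    [NormedSpace ℝ E] [NormedAddCommGroup F] [NormedSpace ℝ F] {f : E → F} {f' : E → E →L[ℝ] F}
    {φ : E →L[ℝ] F} {s : Set E} {δ : ℝ} {u w : E} (hs : Convex ℝ s)
    (hf : ∀ v ∈ s, HasFDerivAt f (f' v) v) (hφ : ∀ v ∈ s, ‖f' v - φ‖ ≤ δ)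
    (hw : w ∈ s) (hu : u ∈ s) : ‖f u - f w - f' w (u - w)‖ ≤ 2 * δ * ‖u - w‖ := by
  refine hs.norm_image_sub_le_of_norm_hasFDerivWithin_le'
    (fun v hv => (hf v hv).hasFDerivWithinAt) (fun v hv => ?_) hw hu
  calc ‖f' v - f' w‖ ≤ ‖f' v - φ‖ + ‖f' w - φ‖ := by
        simpa only [dist_eq_norm] using dist_triangle_right (f' v) (f' w) φ
    _ ≤ 2 * δ := by linarith [hφ v hv, hφ w hw]

section Penalization

variable {ι E : Type*} [Fintype ι]

/-- The smooth penalty `∑ i, max(0, hᵢ(w))²` of the inequality system `h ≤ 0`. -/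
def quadraticPenalty (h : ι → E → ℝ) (w : E) : ℝ := ∑ i, max 0 (h i w) ^ 2

lemma quadraticPenalty_nonneg (h : ι → E → ℝ) (w : E) : 0 ≤ quadraticPenalty h w :=
  Finset.sum_nonneg fun _ _ => sq_nonneg _

lemma quadraticPenalty_eq_zero_iff {h : ι → E → ℝ} {w : E} :
    quadraticPenalty h w = 0 ↔ ∀ i, h i w ≤ 0 := by
  simp [quadraticPenalty, Finset.sum_eq_zero_iff_of_nonneg]

lemma continuousOn_quadraticPenalty [TopologicalSpace E] {h : ι → E → ℝ} {s : Set E}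
    (hh : ∀ i, ContinuousOn (h i) s) : ContinuousOn (quadraticPenalty h) s :=
  continuousOn_finsetSum _ fun i _ => (continuousOn_const.sup (hh i)).pow 2

variable [NormedAddCommGroup E] [NormedSpace ℝ E]

lemma hasFDerivAt_const_mul_quadraticPenalty {h : ι → E → ℝ} {G : ι → E →L[ℝ] ℝ} {w : E}
    (hderiv : ∀ i, HasFDerivAt (h i) (G i) w) (ρ : ℝ) :
    HasFDerivAt (fun v => ρ * quadraticPenalty h v)
      (∑ i with 0 < h i w, (ρ * (2 * h i w)) • G i) w := by
  have hsum : ∑ i with 0 < h i w, (ρ * (2 * h i w)) • G i =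
      ∑ i, (ρ * (2 * max 0 (h i w))) • G i := by
    rw [Finset.sum_filter]
    refine Finset.sum_congr rfl fun i _ => ?_
    split_ifs with hi
    · rw [max_eq_right hi.le]
    · rw [max_eq_left (not_lt.mp hi), mul_zero, mul_zero, zero_smul]
  simp only [quadraticPenalty, Finset.mul_sum, hsum]
  exact HasFDerivAt.fun_sum fun i _ =>
    ((hasDerivAt_max_zero_sq (h i w)).const_mul ρ).comp_hasFDerivAt w (hderiv i)

theorem norm_sub_le_of_isLocalMin_norm_sub_add_penalty {h : ι → E → ℝ} {G : ι → E →L[ℝ] ℝ}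
    {y w : E} {C M ρ : ℝ} (hC : 0 < C) (hM : 0 ≤ M) (hρ : 0 ≤ ρ)
    (hderiv : ∀ i, HasFDerivAt (h i) (G i) w) (hG : IndepCoeffBound C G)
    (hlin : ∀ i, h i w + G i (y - w) ≤ h i y + ‖y - w‖ / (2 * C)) (hy : ∀ i, h i y ≤ M)
    (hmin : IsLocalMin (fun v => ‖v - y‖ + ρ * quadraticPenalty h v) w) :
    ‖y - w‖ ≤ 2 * C * M := by
  obtain ⟨hnorm, hdescent⟩ := norm_le_one_and_norm_sub_le_of_isLocalMin_norm_sub_add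
    (hasFDerivAt_const_mul_quadraticPenalty hderiv ρ) hmin
  obtain ⟨t, ht, μ, hμ, hsum, hμsum⟩ := hG.exists_conic_sum_eq (s := {i | 0 < h i w})
    (l := fun i => ρ * (2 * h i w)) fun i hi => by
      have hpos : 0 < h i w := by simpa using hi
      positivity
  have hviolated (i : ι) (hi : i ∈ t) : G i (y - w) ≤ M + ‖y - w‖ / (2 * C) := by
    have hpos : 0 < h i w := by simpa using ht hi
    linarith [hlin i, hy i]
  have hselfbound : ‖y - w‖ ≤ C * (M + ‖y - w‖ / (2 * C)) :=
    calc ‖y - w‖ ≤ ∑ i ∈ t, μ i * G i (y - w) := by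
          simpa only [← hsum, _root_.sum_apply, _root_.smul_apply, smul_eq_mul] using hdescent
      _ ≤ ∑ i ∈ t, μ i * (M + ‖y - w‖ / (2 * C)) := by
          gcongr with i hi
          · exact hμ i hi
          · exact hviolated i hi
      _ = (∑ i ∈ t, μ i) * (M + ‖y - w‖ / (2 * C)) := by rw [Finset.sum_mul]
      _ ≤ C * (M + ‖y - w‖ / (2 * C)) := by
          gcongr
          exact hμsum.trans (mul_le_of_le_one_right hC.le hnorm)
  have hhalf : C * (‖y - w‖ / (2 * C)) = ‖y - w‖ / 2 := by field_simp
  rw [mul_add, hhalf] at hselfbound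
  linarith

variable [ProperSpace E] {h : ι → E → ℝ} {G : E → ι → E →L[ℝ] ℝ} {y y' : E} {C M R : ℝ}

lemma exists_almost_feasible_dist_le (hC : 0 < C) (hM : 0 ≤ M)
    (hderiv : ∀ w ∈ Metric.closedBall y R, ∀ i, HasFDerivAt (h i) (G w i) w)
    (hG : ∀ w ∈ Metric.closedBall y R, IndepCoeffBound C (G w))
    (hlin : ∀ w ∈ Metric.closedBall y R, ∀ i,
      h i w + G w i (y - w) ≤ h i y + ‖y - w‖ / (2 * C))
    (hy : ∀ i, h i y ≤ M) (hy' : ∀ i, h i y' ≤ 0) (hyy' : dist y' y < R) {ρ : ℝ} (hρ : 0 ≤ ρ) :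
    ∃ w ∈ Metric.closedBall y R, dist y w ≤ 2 * C * M ∧
      ρ * quadraticPenalty h w ≤ dist y' y := by
  have hcont (i : ι) : ContinuousOn (h i) (Metric.closedBall y R) := fun w hw =>
    (hderiv w hw i).continuousAt.continuousWithinAt
  obtain ⟨w, hw, hmin⟩ := (isCompact_closedBall y R).exists_isMinOn ⟨y', hyy'.le⟩
    (((continuousOn_id.sub continuousOn_const).norm).add
      ((continuousOn_quadraticPenalty hcont).const_mul ρ))
  have hvalue : dist w y + ρ * quadraticPenalty h w ≤ dist y' y := by
    have hle := hmin (a := y') hyy'.le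
    simpa [quadraticPenalty_eq_zero_iff.mpr hy', dist_eq_norm] using hle
  have hpenalty : 0 ≤ ρ * quadraticPenalty h w := mul_nonneg hρ (quadraticPenalty_nonneg h w)
  have hwR : dist w y < R := by linarith
  refine ⟨w, hw, ?_, by linarith [dist_nonneg (x := w) (y := y)]⟩
  rw [dist_eq_norm]
  exact norm_sub_le_of_isLocalMin_norm_sub_add_penalty hC hM hρ (hderiv w hw) (hG w hw) (hlin w hw)
    hy (hmin.isLocalMin (Metric.closedBall_mem_nhds_of_mem hwR))

end Penalization

section ErrorBound

variable {ι E : Type*} [Finite ι] [NormedAddCommGroup E] [NormedSpace ℝ E] [ProperSpace E]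
  {h : ι → E → ℝ} {G : E → ι → E →L[ℝ] ℝ} {y y' : E} {C M R : ℝ}

lemma exists_feasible_dist_le (hC : 0 < C) (hM : 0 ≤ M)
    (hderiv : ∀ w ∈ Metric.closedBall y R, ∀ i, HasFDerivAt (h i) (G w i) w)
    (hG : ∀ w ∈ Metric.closedBall y R, IndepCoeffBound C (G w))
    (hlin : ∀ w ∈ Metric.closedBall y R, ∀ i,
      h i w + G w i (y - w) ≤ h i y + ‖y - w‖ / (2 * C))
    (hy : ∀ i, h i y ≤ M) (hy' : ∀ i, h i y' ≤ 0) (hyy' : dist y' y < R) :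
    ∃ w ∈ Metric.closedBall y R, (∀ i, h i w ≤ 0) ∧ dist y w ≤ 2 * C * M := by
  cases nonempty_fintype ι
  have hcont (i : ι) : ContinuousOn (h i) (Metric.closedBall y R) := fun w hw =>
    (hderiv w hw i).continuousAt.continuousWithinAt
  obtain ⟨w, ⟨hwR, hwM⟩, hw⟩ := exists_mem_nonpos_of_forall_nat_mul_le
    ((isCompact_closedBall y R).inter_right (Metric.isClosed_closedBall (ε := 2 * C * M)))
    ((continuousOn_quadraticPenalty hcont).mono Set.inter_subset_left) fun k => by
      obtain ⟨w, hwR, hwM, hwk⟩ :=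
        exists_almost_feasible_dist_le hC hM hderiv hG hlin hy hy' hyy' k.cast_nonneg
      exact ⟨w, ⟨hwR, Metric.mem_closedBall'.mpr hwM⟩, hwk⟩
  exact ⟨w, hwR, quadraticPenalty_eq_zero_iff.mp (hw.antisymm (quadraticPenalty_nonneg h w)),
    Metric.mem_closedBall'.mp hwM⟩

theorem exists_feasible_dist_le_of_norm_fderiv_sub_le (hC : 0 < C) (hM : 0 ≤ M)
    (hderiv : ∀ w ∈ Metric.closedBall y R, ∀ i, HasFDerivAt (h i) (G w i) w)
    (hG : ∀ w ∈ Metric.closedBall y R, IndepCoeffBound C (G w)) {φ : ι → E →L[ℝ] ℝ}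
    (hφ : ∀ w ∈ Metric.closedBall y R, ∀ i, ‖G w i - φ i‖ ≤ 1 / (4 * C))
    (hy : ∀ i, h i y ≤ M) (hy' : ∀ i, h i y' ≤ 0) (hyy' : dist y' y < R) :
    ∃ w ∈ Metric.closedBall y R, (∀ i, h i w ≤ 0) ∧ dist y w ≤ 2 * C * M := by
  refine exists_feasible_dist_le hC hM hderiv hG (fun w hw i => ?_) hy hy' hyy'
  have hyR : y ∈ Metric.closedBall y R := Metric.mem_closedBall_self (dist_nonneg.trans hyy'.le)
  have hlin := norm_sub_sub_apply_le_of_norm_fderiv_sub_le (convex_closedBall y R)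
    (fun v hv => hderiv v hv i) (fun v hv => hφ v hv i) hw hyR
  have hconst : 2 * (1 / (4 * C)) * ‖y - w‖ = ‖y - w‖ / (2 * C) := by field_simp; norm_num
  rw [hconst, Real.norm_eq_abs] at hlin
  linarith [neg_le_of_abs_le hlin]

end ErrorBound

lemma exists_eventually_forall_closedBall {X E : Type*} [TopologicalSpace X]
    [PseudoMetricSpace E] {x₀ : X} {y₀ : E} {P : X × E → Prop}
    (hP : ∀ᶠ p in 𝓝 (x₀, y₀), P p) :
    ∃ R : ℝ, ∀ᶠ z : X × E × E in 𝓝 (x₀, y₀, y₀),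
      dist z.2.2 z.2.1 < R ∧ ∀ w ∈ Metric.closedBall z.2.1 R, P (z.1, w) := by
  obtain ⟨A, hA, B, hB, hAB⟩ := mem_nhds_prod_iff.mp hP
  obtain ⟨r, hr, hrB⟩ := Metric.mem_nhds_iff.mp hB
  have hball := Metric.ball_mem_nhds y₀ (show 0 < r / 4 by positivity)
  refine ⟨r / 2, ?_⟩
  filter_upwards [prod_mem_nhds hA (prod_mem_nhds hball hball)]
  rintro ⟨x, y, y'⟩ ⟨hx, hy, hy'⟩
  rw [Metric.mem_ball] at hy hy'
  refine ⟨by linarith [dist_triangle_right y' y y₀], fun w hw => hAB ⟨hx, hrB ?_⟩⟩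
  rw [Metric.mem_closedBall] at hw
  rw [Metric.mem_ball]
  linarith [dist_triangle w y y₀]

section ParametricErrorBound

variable {X ι E : Type*} [TopologicalSpace X] [NormedAddCommGroup E] [NormedSpace ℝ E]

lemma exists_pos_eventually_indepCoeffBound_and_norm_sub_le [Finite ι] {G : X → ι → E} {x₀ : X}
    (hcont : ContinuousAt G x₀) (hrank : HasConstantRankAt ℝ G x₀) :
    ∃ C > 0, ∀ᶠ x in 𝓝 x₀, IndepCoeffBound C (G x) ∧ ∀ i, ‖G x i - G x₀ i‖ ≤ 1 / (4 * C) := by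
  obtain ⟨C, hbound, hC⟩ :=
    ((eventually_indepCoeffBound (G x₀)).and (eventually_gt_atTop 0)).exists
  have hclose : ∀ᶠ x in 𝓝 x₀, ∀ i, ‖G x i - G x₀ i‖ ≤ 1 / (4 * C) :=
    eventually_all.mpr fun i =>
      ((continuousAt_pi.mp hcont i).sub continuousAt_const).norm.eventually_le_const
        (by simpa using hC)
  refine ⟨C, hC, ?_⟩
  filter_upwards [hcont.eventually hbound, hrank.eventually_linearIndepOn, hclose]
    with x hxbound hxindep hxclose
  exact ⟨hxbound hxindep, hxclose⟩

theorem exists_eventually_feasible_dist_le_of_hasConstantRankAt [Finite ι] [ProperSpace E]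
    {h : ι → X → E → ℝ} {G : X × E → ι → E →L[ℝ] ℝ} {x₀ : X} {y₀ : E}
    (hderiv : ∀ᶠ p in 𝓝 (x₀, y₀), ∀ i, HasFDerivAt (h i p.1) (G p i) p.2)
    (hcont : ContinuousAt G (x₀, y₀)) (hrank : HasConstantRankAt ℝ G (x₀, y₀))
    {P : X × E → Prop} (hP : ∀ᶠ p in 𝓝 (x₀, y₀), P p) :
    ∃ κ > 0, ∀ᶠ z : X × E × E in 𝓝 (x₀, y₀, y₀), ∀ (c : ι → ℝ) (M : ℝ), 0 ≤ M →
      (∀ i, h i z.1 z.2.1 ≤ c i + M) → (∀ i, h i z.1 z.2.2 ≤ c i) →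
        ∃ w, P (z.1, w) ∧ (∀ i, h i z.1 w ≤ c i) ∧ dist z.2.1 w ≤ κ * M := by
  cases nonempty_fintype ι
  obtain ⟨C, hC, hG⟩ := exists_pos_eventually_indepCoeffBound_and_norm_sub_le hcont hrank
  obtain ⟨R, hR⟩ := exists_eventually_forall_closedBall (hP.and (hderiv.and hG))
  refine ⟨2 * C, by positivity, ?_⟩
  filter_upwards [hR]
  rintro ⟨x, y, y'⟩ ⟨hyy', hball⟩ c M hM hy hy'
  obtain ⟨w, hw, hfeas, hdist⟩ := exists_feasible_dist_le_of_norm_fderiv_sub_le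
    (h := fun i v => h i x v - c i) (G := fun v => G (x, v)) hC hM
    (fun v hv i => ((hball v hv).2.1 i).sub_const (c i)) (fun v hv => (hball v hv).2.2.1)
    (fun v hv => (hball v hv).2.2.2) (fun i => sub_le_iff_le_add'.mpr (hy i))
    (fun i => sub_nonpos.mpr (hy' i)) hyy'
  exact ⟨w, (hball w hw).1, fun i => sub_nonpos.mp (hfeas i), hdist⟩

end ParametricErrorBound

section LowerLevelProblem

variable {n m q : ℕ}

lemma InnerSemicontinuous.eventually_inter_nonempty {S : (Fin n → ℝ) → Set (Fin m → ℝ)}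
    {xb : Fin n → ℝ} {yb : Fin m → ℝ} (hS : InnerSemicontinuous S xb yb) {B : Set (Fin m → ℝ)}
    (hB : B ∈ 𝓝 yb) : ∀ᶠ x in 𝓝 xb, (S x ∩ B).Nonempty := by
  by_contra hfreq
  obtain ⟨x, hx, hempty⟩ := exists_seq_forall_of_frequently (not_eventually.mp hfreq)
  obtain ⟨y, hy, hyS⟩ := hS x hx
  obtain ⟨k, hkS, hkB⟩ := (hyS.and (hy hB)).exists
  exact hempty k ⟨y k, hkS, hkB⟩

variable {f : (Fin n → ℝ) → (Fin m → ℝ) → ℝ} {g : (Fin n → ℝ) → (Fin m → ℝ) → Fin q → ℝ}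
  {x xb : Fin n → ℝ} {y w yb : Fin m → ℝ}

lemma toReal_phi_eq_of_mem_Sol (hy : y ∈ Sol f g x) : (phi f g x).toReal = f x y := by
  have hphi : phi f g x = f x y := by
    refine IsLeast.csInf_eq ⟨⟨y, hy.1, rfl⟩, ?_⟩
    rintro _ ⟨z, hz, rfl⟩
    exact_mod_cast hy.2 z hz
  rw [hphi, EReal.toReal_coe]

lemma mem_Sol_of_le (hy : y ∈ Sol f g x) (hw : ∀ j, g x w j ≤ 0) (hwy : f x w ≤ f x y) :
    w ∈ Sol f g x :=
  ⟨hw, fun z hz => hwy.trans (hy.2 z hz)⟩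

lemma rrcq_of_eventually_exists_mem_Sol_dist_le (hisc : InnerSemicontinuous (Sol f g) xb yb)
    {κ : ℝ} (hκ : 0 < κ)
    (hdist : ∀ᶠ z : (Fin n → ℝ) × (Fin m → ℝ) × (Fin m → ℝ) in 𝓝 (xb, yb, yb),
      z.2.2 ∈ Sol f g z.1 → ∀ M : ℝ, 0 ≤ M → f z.1 z.2.1 ≤ f z.1 z.2.2 + M →
        (∀ j, g z.1 z.2.1 j ≤ M) → ∃ w ∈ Sol f g z.1, dist z.2.1 w ≤ κ * M) :
    RRCQ f g xb yb := by
  obtain ⟨ε, hε, hdist⟩ := Metric.eventually_nhds_iff.mp hdist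
  obtain ⟨δ, hδ, hsol⟩ := Metric.eventually_nhds_iff.mp
    (hisc.eventually_inter_nonempty (Metric.ball_mem_nhds yb hε))
  refine ⟨κ, hκ, min ε δ, lt_min hε hδ, fun x y hx hy _ => ?_⟩
  obtain ⟨y', hy'S, hy'⟩ := hsol (hx.trans_le (min_le_right ε δ))
  have hnear : dist (x, y, y') (xb, yb, yb) < ε :=
    max_lt (hx.trans_le (min_le_left ε δ)) (max_lt (hy.trans_le (min_le_left ε δ)) hy')
  rw [toReal_phi_eq_of_mem_Sol hy'S]
  set M := max (max 0 (f x y - f x y')) (Finset.univ.fold max 0 fun j => g x y j)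
  have hf : f x y - f x y' ≤ M := (le_max_right _ _).trans (le_max_left _ _)
  have hg (j : Fin q) : g x y j ≤ M :=
    (Finset.le_fold_max _).mpr (.inr ⟨j, Finset.mem_univ j, le_rfl⟩) |>.trans (le_max_right _ _)
  obtain ⟨w, hw, hwM⟩ := hdist hnear hy'S M ((le_max_left _ _).trans (le_max_left _ _))
    (sub_le_iff_le_add'.mp hf) hg
  exact (Metric.infDist_le_dist_of_mem hw).trans hwM

/-- The index set `I(x̄,ȳ) ∪ {0}`, where `none` stands for the index `0`. -/
def activeIndices (g : (Fin n → ℝ) → (Fin m → ℝ) → Fin q → ℝ) (xb : Fin n → ℝ)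
    (yb : Fin m → ℝ) : Set (Option (Fin q)) :=
  {io | ∀ j, io = some j → g xb yb j = 0}

/-- The functions `f, g₁, …, g_q` as one family, indexed like `yGrad`. At the index `0` (`none`) it
has `f` instead of `g₀ = f − φ`: the two differ by a constant in `y`. -/
def lowerLevelFun (f : (Fin n → ℝ) → (Fin m → ℝ) → ℝ)
    (g : (Fin n → ℝ) → (Fin m → ℝ) → Fin q → ℝ) (io : Option (Fin q)) (x : Fin n → ℝ)
    (y : Fin m → ℝ) : ℝ :=
  io.elim (f x y) (g x y)

lemma fderiv_lowerLevelFun (io : Option (Fin q)) (p : (Fin n → ℝ) × (Fin m → ℝ)) :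
    fderiv ℝ (lowerLevelFun f g io p.1) p.2 = yGrad f g p io := by
  cases io <;> rfl

lemma mem_Sol_of_lowerLevelFun_le (hy : y ∈ Sol f g x)
    (hw : ∀ i ∈ activeIndices g xb yb, lowerLevelFun f g i x w ≤ i.elim (f x y) fun _ => 0)
    (hinactive : ∀ j, g xb yb j ≠ 0 → g x w j ≤ 0) : w ∈ Sol f g x := by
  refine mem_Sol_of_le hy (fun j => ?_) (hw none (by simp [activeIndices]))
  by_cases hj : g xb yb j = 0
  · exact hw (some j) (by simpa [activeIndices] using hj)
  · exact hinactive j hj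

lemma eventually_le_zero_of_inactive (hg : ContinuousAt (fun p => g p.1 p.2) (xb, yb))
    (hyb : ∀ j, g xb yb j ≤ 0) :
    ∀ᶠ p : (Fin n → ℝ) × (Fin m → ℝ) in 𝓝 (xb, yb), ∀ j, g xb yb j ≠ 0 → g p.1 p.2 j ≤ 0 := by
  refine eventually_all.mpr fun j => ?_
  by_cases hj : g xb yb j = 0
  · exact .of_forall fun _ h => absurd hj h
  · filter_upwards [(continuousAt_pi.mp hg j).eventually_le_const ((hyb j).lt_of_ne hj)]
      with p hp _ using hp

lemma eventually_differentiableAt_lowerLevelFun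
    (hdiff : ∀ᶠ p in 𝓝 (xb, yb), DifferentiableAt ℝ (f p.1) p.2 ∧
      ∀ j, DifferentiableAt ℝ (fun y => g p.1 y j) p.2) :
    ∀ᶠ p in 𝓝 (xb, yb), ∀ i : activeIndices g xb yb,
      DifferentiableAt ℝ (lowerLevelFun f g i p.1) p.2 := by
  filter_upwards [hdiff] with p ⟨hf, hg⟩
  rintro ⟨_ | j, _⟩
  exacts [hf, hg j]

lemma continuousAt_yGrad
    (hf : ContinuousAt (fun p : (Fin n → ℝ) × (Fin m → ℝ) => fderiv ℝ (f p.1) p.2) (xb, yb))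
    (hg : ∀ j, ContinuousAt (fun p : (Fin n → ℝ) × (Fin m → ℝ) =>
      fderiv ℝ (fun y => g p.1 y j) p.2) (xb, yb)) :
    ContinuousAt (yGrad f g) (xb, yb) := by
  refine continuousAt_pi.mpr ?_
  rintro (_ | j)
  exacts [hf, hg j]

theorem crcq_isc_implies_rrcq_general
    (hg : ContinuousAt (fun p : (Fin n → ℝ) × (Fin m → ℝ) => g p.1 p.2) (xb, yb))
    (hgph : yb ∈ Sol f g xb) (hisc : InnerSemicontinuous (Sol f g) xb yb)
    (hdiff : ∀ᶠ p in 𝓝 (xb, yb), ∀ i : activeIndices g xb yb,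
      DifferentiableAt ℝ (lowerLevelFun f g i p.1) p.2)
    (hcont : ∀ i ∈ activeIndices g xb yb, ContinuousAt (yGrad f g · i) (xb, yb))
    (hrank : HasConstantRankAt ℝ (fun p (i : activeIndices g xb yb) => yGrad f g p i) (xb, yb)) :
    RRCQ f g xb yb := by
  have hderiv : ∀ᶠ p in 𝓝 (xb, yb), ∀ i : activeIndices g xb yb,
      HasFDerivAt (lowerLevelFun f g i p.1) (yGrad f g p i) p.2 := by
    filter_upwards [hdiff] with p hp i
    exact fderiv_lowerLevelFun i.1 p ▸ (hp i).hasFDerivAt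
  obtain ⟨κ, hκ, hbound⟩ := exists_eventually_feasible_dist_le_of_hasConstantRankAt hderiv
    (continuousAt_pi.mpr fun i => hcont i i.2) hrank (eventually_le_zero_of_inactive hg hgph.1)
  refine rrcq_of_eventually_exists_mem_Sol_dist_le hisc hκ ?_
  filter_upwards [hbound]
  rintro ⟨x, y, y'⟩ hz hy' M hM hfM hgM
  obtain ⟨w, hinactive, hw, hwM⟩ := hz (fun i => i.1.elim (f x y') fun _ => 0) M hM
    (by rintro ⟨_ | j, _⟩; exacts [hfM, (hgM j).trans_eq (zero_add M).symm])
    (by rintro ⟨_ | j, _⟩; exacts [le_rfl, hy'.1 j])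
  exact ⟨w, mem_Sol_of_lowerLevelFun_le hy' (fun i hi => hw ⟨i, hi⟩) hinactive, hwM⟩

end LowerLevelProblem

/-- Lemma 3.6: inner semicontinuity of `S`, local Lipschitz continuity and continuous
differentiability w.r.t. `y` of the data, and a local constant rank condition on the
families of `y`-gradients indexed by subsets of `I(x̄,ȳ) ∪ {0}` imply RRCQ at `(x̄,ȳ)`. -/
theorem crcq_isc_implies_rrcq {n m q : ℕ}
    (f : (Fin n → ℝ) → (Fin m → ℝ) → ℝ) (g : (Fin n → ℝ) → (Fin m → ℝ) → Fin q → ℝ)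
    (hf : Continuous fun p : (Fin n → ℝ) × (Fin m → ℝ) => f p.1 p.2)
    (hg : Continuous fun p : (Fin n → ℝ) × (Fin m → ℝ) => fun i => g p.1 p.2 i)
    (xb : Fin n → ℝ) (yb : Fin m → ℝ)
    (hgph : yb ∈ Sol f g xb)
    (hisc : InnerSemicontinuous (Sol f g) xb yb)
    (hLip : ∃ K : ℝ≥0, ∃ V ∈ 𝓝 ((xb, yb) : (Fin n → ℝ) × (Fin m → ℝ)),
      LipschitzOnWith K (fun p : (Fin n → ℝ) × (Fin m → ℝ) => f p.1 p.2) V ∧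
      ∀ i, LipschitzOnWith K (fun p : (Fin n → ℝ) × (Fin m → ℝ) => g p.1 p.2 i) V)
    (hC1 : ∃ V ∈ 𝓝 ((xb, yb) : (Fin n → ℝ) × (Fin m → ℝ)),
      (∀ p ∈ V, DifferentiableAt ℝ (f p.1) p.2 ∧
        ∀ i, DifferentiableAt ℝ (fun y => g p.1 y i) p.2) ∧
      ContinuousOn (fun p : (Fin n → ℝ) × (Fin m → ℝ) => fderiv ℝ (f p.1) p.2) V ∧
      ∀ i, ContinuousOn
        (fun p : (Fin n → ℝ) × (Fin m → ℝ) => fderiv ℝ (fun y => g p.1 y i) p.2) V)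
    (hCR : ∃ U ∈ 𝓝 ((xb, yb) : (Fin n → ℝ) × (Fin m → ℝ)),
      ∀ J : Set (Option (Fin q)),
        (∀ io ∈ J, ∀ j : Fin q, io = some j → g xb yb j = 0) →
        ∃ r : ℕ, ∀ p ∈ U,
          Module.finrank ℝ ↥(Submodule.span ℝ (yGrad f g p '' J)) = r) :
    RRCQ f g xb yb := by
  obtain ⟨V, hV, hdiff, hfcont, hgcont⟩ := hC1
  obtain ⟨U, hU, hrank⟩ := hCR
  have hcont : ContinuousAt (yGrad f g) (xb, yb) :=
    continuousAt_yGrad (hfcont.continuousAt hV) fun j => (hgcont j).continuousAt hV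
  exact crcq_isc_implies_rrcq_general hg.continuousAt hgph hisc
    (eventually_differentiableAt_lowerLevelFun (eventually_of_mem hV hdiff))
    (fun i _ => continuousAt_pi.mp hcont i)
    (hasConstantRankAt_restrict_of_finrank_eq hU hrank)
end

section
/- Let c ∈ ℝᵐ, B ∈ ℝ^{q×m}, a ∈ ℝ^q and D ∈ ℝ^{q×n} be fixed and let S(x) = argmin_y { cᵀy | a + Dx + By ≤ 0 }. Then for every (x̄,ȳ) ∈ gph S with x̄ in the interior of dom S = { x | S(x) ≠ ∅ }, the map S is inner semicontinuous at (x̄,ȳ) and the R-regularity constraint qualification (RRCQ) holds at (x̄,ȳ). -/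
open Filter Topology
open scoped ENNReal NNReal

/-!
Everything rests on Hoffman's error bound: for finitely many linear inequalities `A z ≤ b` on a
finite-dimensional space, the distance of `y` to a nonempty solution set is at most `κ` times the
largest violation at `y`, with `κ` independent of `b`. Take the point `p` of the polyhedron nearest
to `y`. By convexity it stays nearest when the inactive constraints are dropped, so `p - y` cannot
be shortened by adding a direction `d` with `A d ≤ 0` on the active rows. A nonzero vector with this
property has `A i (p - y) < 0` for some active row `i`, and by compactness of the unit sphere this
holds with a uniform margin; as there are finitely many possible active sets, one `κ` works.

The solution set of a linear program is the polyhedron cut out by the constraints and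
`cᵀ z ≤ φ(x)`, so Hoffman's bound for the system with rows `B` and `c` is RRCQ. Applied to the
rows `B` alone it shows that the optimal value is Lipschitz in the right-hand side, and the two
together make the solution map Lipschitz on its domain, hence inner semicontinuous in its interior.
-/

section ActiveConstraints

variable {E ι : Type*} [AddCommGroup E] [Module ℝ E] [TopologicalSpace E]
  [IsTopologicalAddGroup E] [ContinuousSMul ℝ E] [Finite ι]

theorem isMinOn_activeConstraints {f : E → ℝ} (hf : ConvexOn ℝ Set.univ f) {A : ι → E →L[ℝ] ℝ}
    {b : ι → ℝ} {p : E} (hp : ∀ i, A i p ≤ b i) (hmin : IsMinOn f {z | ∀ i, A i z ≤ b i} p) :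
    IsMinOn f {z | ∀ i, A i p = b i → A i z ≤ b i} p := by
  have hconvex : Convex ℝ {z | ∀ i, A i p = b i → A i z ≤ b i} := by
    simp only [Set.ofPred_forall]
    exact convex_iInter fun i => convex_iInter fun _ => convex_halfSpace_le (A i).isLinear (b i)
  have hinactive : ∀ᶠ z in 𝓝 p, ∀ i, A i p < b i → A i z < b i :=
    eventually_all.2 fun i => eventually_imp_distrib_left.2 fun hi =>
      (A i).continuous.continuousAt.eventually_lt_const hi
  refine IsMinOn.of_isLocalMinOn_of_convexOn (fun i hi => hi.le) ?_
    (hf.subset (Set.subset_univ _) hconvex)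
  filter_upwards [hinactive.filter_mono nhdsWithin_le_nhds, self_mem_nhdsWithin] with z hz hactive
  exact hmin fun i => (hp i).eq_or_lt.elim (hactive i) fun hi => (hz i hi).le

end ActiveConstraints

section Hoffman

variable {E ι : Type*} [NormedAddCommGroup E] [NormedSpace ℝ E]

/-- The vectors whose norm cannot be decreased by adding an element of the polyhedral cone
`{d | A d ≤ 0}`. For the Euclidean norm this is the dual cone; the differences `p - y` between a
point `y` and its nearest point `p` in a polyhedron are of this form. -/
def minNormPoints (A : ι → E →L[ℝ] ℝ) : Set E :=
  {p | ∀ d, (∀ i, A i d ≤ 0) → ‖p‖ ≤ ‖p + d‖}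

theorem isClosed_minNormPoints (A : ι → E →L[ℝ] ℝ) : IsClosed (minNormPoints A) := by
  simp only [minNormPoints, Set.ofPred_forall]
  exact isClosed_iInter fun d => isClosed_iInter fun _ =>
    isClosed_le continuous_norm (continuous_id.add continuous_const).norm

theorem smul_mem_minNormPoints {A : ι → E →L[ℝ] ℝ} {p : E} (hp : p ∈ minNormPoints A) {r : ℝ}
    (hr : 0 < r) : r • p ∈ minNormPoints A := by
  intro d hd
  have hmin : ‖p‖ ≤ ‖p + r⁻¹ • d‖ := hp _ fun i => by
    simpa using mul_nonpos_of_nonneg_of_nonpos (inv_nonneg.2 hr.le) (hd i)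
  calc ‖r • p‖ = r * ‖p‖ := norm_smul_of_nonneg hr.le p
    _ ≤ r * ‖p + r⁻¹ • d‖ := by gcongr
    _ = ‖r • p + d‖ := by
      rw [← norm_smul_of_nonneg hr.le, smul_add, smul_inv_smul₀ hr.ne']

theorem eq_zero_of_mem_minNormPoints {A : ι → E →L[ℝ] ℝ} {p : E} (hp : p ∈ minNormPoints A)
    (hA : ∀ i, 0 ≤ A i p) : p = 0 := by
  simpa using hp (-p) fun i => by simpa using hA i

theorem sub_mem_minNormPoints_of_isMinOn_dist [Finite ι] {A : ι → E →L[ℝ] ℝ} {b : ι → ℝ}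
    {p y : E} (hp : ∀ i, A i p ≤ b i) (hmin : IsMinOn (dist · y) {z | ∀ i, A i z ≤ b i} p) :
    p - y ∈ minNormPoints fun i : {i // A i p = b i} => A i := by
  intro d hd
  have hpd : dist p y ≤ dist (p + d) y :=
    isMinOn_activeConstraints (convexOn_dist y convex_univ) hp hmin fun i hi => by
      simpa [hi] using hd ⟨i, hi⟩
  rwa [dist_eq_norm, dist_eq_norm, add_sub_right_comm] at hpd

variable [FiniteDimensional ℝ E] [Finite ι]

theorem exists_norm_le_of_mem_minNormPoints (A : ι → E →L[ℝ] ℝ) :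
    ∃ κ > 0, ∀ p ∈ minNormPoints A, ∀ t, 0 ≤ t → (∀ i, -t ≤ A i p) → ‖p‖ ≤ κ * t := by
  cases nonempty_fintype ι
  let violation (p : E) : ℝ := ‖fun i => max 0 (-A i p)‖
  have hcont : Continuous violation := by fun_prop
  have hpos : ∀ p ∈ Metric.sphere 0 1 ∩ minNormPoints A, 0 < violation p := by
    rintro p ⟨hnorm, hp⟩
    refine norm_pos_iff.2 fun h => ?_
    have hp0 : p = 0 := eq_zero_of_mem_minNormPoints hp fun i => by
      simpa using congrFun h i
    simp [hp0] at hnorm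
  obtain ⟨δ, hδ, hviolation⟩ :=
    ((isCompact_sphere 0 1).inter_right (isClosed_minNormPoints A)).exists_forall_le'
      hcont.continuousOn hpos
  refine ⟨δ⁻¹, inv_pos.2 hδ, fun p hp t ht hAp => ?_⟩
  rcases eq_or_ne p 0 with rfl | hp0
  · simpa using mul_nonneg (inv_pos.2 hδ).le ht
  have hnorm : 0 < ‖p‖ := norm_pos_iff.2 hp0
  have hunit : ‖p‖⁻¹ • p ∈ Metric.sphere 0 1 ∩ minNormPoints A :=
    ⟨by simp [norm_smul, hnorm.ne'], smul_mem_minNormPoints hp (inv_pos.2 hnorm)⟩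
  have hle : violation (‖p‖⁻¹ • p) ≤ ‖p‖⁻¹ * t := by
    refine (pi_norm_le_iff_of_nonneg (by positivity)).2 fun i => ?_
    rw [Real.norm_of_nonneg (le_max_left _ _), map_smul, smul_eq_mul, ← mul_neg]
    exact max_le (by positivity) (by gcongr; linarith [hAp i])
  have hδt : δ ≤ ‖p‖⁻¹ * t := (hviolation _ hunit).trans hle
  rwa [le_inv_mul_iff₀ hδ, mul_comm, ← le_inv_mul_iff₀ hnorm]

theorem hoffman_errorBound (A : ι → E →L[ℝ] ℝ) :
    ∃ κ > 0, ∀ (b : ι → ℝ) (y : E) (t : ℝ), 0 ≤ t → (∀ i, A i y ≤ b i + t) →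
      (∃ z, ∀ i, A i z ≤ b i) → ∃ z, (∀ i, A i z ≤ b i) ∧ dist y z ≤ κ * t := by
  choose κ hκ hbound using fun I : Set ι => exists_norm_le_of_mem_minNormPoints fun i : I => A i
  obtain ⟨M, hM⟩ := Finite.exists_le κ
  refine ⟨M, (hκ ∅).trans_le (hM ∅), fun b y t ht hy hne => ?_⟩
  have hclosed : IsClosed {z | ∀ i, A i z ≤ b i} := by
    simp only [Set.ofPred_forall]
    exact isClosed_iInter fun i => isClosed_le (A i).continuous continuous_const
  obtain ⟨p, hp, hdist⟩ := hclosed.exists_infDist_eq_dist hne y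
  have hnearest : IsMinOn (dist · y) {z | ∀ i, A i z ≤ b i} p := fun z hz => by
    simpa [dist_comm _ y, ← hdist] using Metric.infDist_le_dist_of_mem (x := y) hz
  refine ⟨p, hp, ?_⟩
  calc dist y p = ‖p - y‖ := by rw [dist_comm, dist_eq_norm]
    _ ≤ κ {i | A i p = b i} * t :=
      hbound {i | A i p = b i} _ (sub_mem_minNormPoints_of_isMinOn_dist hp hnearest) t ht
        fun ⟨i, (hi : A i p = b i)⟩ => by rw [map_sub, hi]; linarith [hy i]
    _ ≤ M * t := by gcongr; exact hM _

end Hoffman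

theorem apply_le_apply_add_dist {ι : Type*} [Fintype ι] (b b' : ι → ℝ) (i : ι) :
    b i ≤ b' i + dist b b' := by
  linarith [(le_abs_self _).trans (dist_le_pi_dist b b' i)]

section LinearProgram

variable {E ι : Type*} [NormedAddCommGroup E] [NormedSpace ℝ E]

/-- The solution set of the linear program of minimizing `ℓ y` subject to `A i y ≤ b i` for
all `i`, regarded as a set-valued map of the right-hand side `b`. -/
def linProgSol (ℓ : E →L[ℝ] ℝ) (A : ι → E →L[ℝ] ℝ) (b : ι → ℝ) : Set E :=
  {y | (∀ i, A i y ≤ b i) ∧ ∀ z, (∀ i, A i z ≤ b i) → ℓ y ≤ ℓ z}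

variable [FiniteDimensional ℝ E]

theorem linProgSol_errorBound [Finite ι] (ℓ : E →L[ℝ] ℝ) (A : ι → E →L[ℝ] ℝ) :
    ∃ κ > 0, ∀ (b : ι → ℝ), ∀ w ∈ linProgSol ℓ A b, ∀ (y : E) (t : ℝ), 0 ≤ t →
      ℓ y ≤ ℓ w + t → (∀ i, A i y ≤ b i + t) → ∃ z ∈ linProgSol ℓ A b, dist y z ≤ κ * t := by
  obtain ⟨κ, hκ, hbound⟩ := hoffman_errorBound fun o : Option ι => o.elim ℓ A
  refine ⟨κ, hκ, fun b w hw y t ht hℓ hA => ?_⟩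
  obtain ⟨z, hz, hdist⟩ := hbound (fun o => o.elim (ℓ w) b) y t ht
    (Option.forall.2 ⟨hℓ, hA⟩) ⟨w, Option.forall.2 ⟨le_rfl, hw.1⟩⟩
  obtain ⟨hzℓ, hzA⟩ := Option.forall.1 hz
  exact ⟨z, ⟨hzA, fun v hv => hzℓ.trans (hw.2 v hv)⟩, hdist⟩

variable [Fintype ι]

theorem linProg_value_lipschitz (ℓ : E →L[ℝ] ℝ) (A : ι → E →L[ℝ] ℝ) :
    ∃ K ≥ 0, ∀ (b b' : ι → ℝ), ∀ y ∈ linProgSol ℓ A b, ∀ z, (∀ i, A i z ≤ b' i) →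
      ℓ y ≤ ℓ z + K * dist b b' := by
  obtain ⟨κ, hκ, hbound⟩ := hoffman_errorBound A
  refine ⟨‖ℓ‖ * κ, by positivity, fun b b' y hy z hz => ?_⟩
  obtain ⟨w, hw, hdist⟩ := hbound b z (dist b b') dist_nonneg
    (fun i => (hz i).trans (dist_comm b b' ▸ apply_le_apply_add_dist b' b i)) ⟨y, hy.1⟩
  have hℓ : ℓ w - ℓ z ≤ ‖ℓ‖ * dist z w := by
    simpa [dist_comm z w, dist_eq_norm] using (le_abs_self _).trans (ℓ.le_opNorm (w - z))
  calc ℓ y ≤ ℓ w := hy.2 w hw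
    _ ≤ ℓ z + ‖ℓ‖ * dist z w := by linarith
    _ ≤ ℓ z + ‖ℓ‖ * (κ * dist b b') := by gcongr
    _ = ℓ z + ‖ℓ‖ * κ * dist b b' := by rw [mul_assoc]

theorem linProgSol_lipschitz (ℓ : E →L[ℝ] ℝ) (A : ι → E →L[ℝ] ℝ) :
    ∃ L, ∀ (b b' : ι → ℝ), ∀ y ∈ linProgSol ℓ A b, (linProgSol ℓ A b').Nonempty →
      ∃ z ∈ linProgSol ℓ A b', dist y z ≤ L * dist b b' := by
  obtain ⟨κ, -, hbound⟩ := linProgSol_errorBound ℓ A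
  obtain ⟨K, hK, hvalue⟩ := linProg_value_lipschitz ℓ A
  refine ⟨κ * (K + 1), fun b b' y hy ⟨w, hw⟩ => ?_⟩
  have hdist : 0 ≤ dist b b' := dist_nonneg
  rw [mul_assoc]
  refine hbound b' w hw y _ (by positivity) ?_ fun i => ?_
  · linarith [hvalue b b' y hy w hw.1]
  · linarith [hy.1 i, apply_le_apply_add_dist b b' i, mul_nonneg hK hdist]

end LinearProgram

section BilevelNotions

variable {n m q : ℕ}

theorem innerSemicontinuous_of_eventually_exists_dist_le {S : (Fin n → ℝ) → Set (Fin m → ℝ)}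
    {xb : Fin n → ℝ} {yb : Fin m → ℝ} {ρ : (Fin n → ℝ) → ℝ} (hρ : Tendsto ρ (𝓝 xb) (𝓝 0))
    (hS : ∀ᶠ x in 𝓝 xb, ∃ z ∈ S x, dist yb z ≤ ρ x) : InnerSemicontinuous S xb yb := by
  intro x hx
  obtain ⟨y, hy⟩ := (hx.eventually hS).choice
  refine ⟨y, tendsto_iff_dist_tendsto_zero.2 ?_, hy.mono fun k hk => hk.1⟩
  exact squeeze_zero' (.of_forall fun k => dist_nonneg)
    (hy.mono fun k hk => (dist_comm _ _).trans_le hk.2) (hρ.comp hx)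

variable {f : (Fin n → ℝ) → (Fin m → ℝ) → ℝ} {g : (Fin n → ℝ) → (Fin m → ℝ) → Fin q → ℝ}

theorem phi_eq_of_mem_sol {x : Fin n → ℝ} {y : Fin m → ℝ} (hy : y ∈ Sol f g x) :
    phi f g x = f x y := by
  refine IsLeast.csInf_eq ⟨⟨y, hy.1, rfl⟩, ?_⟩
  rintro _ ⟨z, hz, rfl⟩
  exact EReal.coe_le_coe (hy.2 z hz)

theorem rrcq_of_errorBound {κ : ℝ} (hκ : 0 < κ)
    (hbound : ∀ x, ∀ w ∈ Sol f g x, ∀ y t, 0 ≤ t → f x y ≤ f x w + t → (∀ i, g x y i ≤ t) →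
      ∃ z ∈ Sol f g x, dist y z ≤ κ * t) (xb : Fin n → ℝ) (yb : Fin m → ℝ) :
    RRCQ f g xb yb := by
  refine ⟨κ, hκ, 1, one_pos, ?_⟩
  rintro x y - - ⟨w, hw⟩
  rw [phi_eq_of_mem_sol hw, EReal.toReal_coe]
  obtain ⟨z, hz, hdist⟩ := hbound x w hw y
    (max (max 0 (f x y - f x w)) (Finset.univ.fold max 0 (g x y))) (by simp)
    (sub_le_iff_le_add'.1 (by simp))
    fun i => le_max_of_le_right (Finset.le_fold_max _ |>.2 (.inr ⟨i, Finset.mem_univ i, le_rfl⟩))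
  exact (Metric.infDist_le_dist_of_mem hz).trans hdist

end BilevelNotions

/-- The linear functional `y ↦ cᵀ y`, in the bundled form in which linear programs take their
objective and their constraint rows. -/
noncomputable def dotProductCLM {κ : Type*} [Fintype κ] (c : κ → ℝ) : (κ → ℝ) →L[ℝ] ℝ :=
  LinearMap.toContinuousLinearMap (dotProductBilin ℝ ℝ c)

section RightHandSide

variable {n m q : ℕ} (c : Fin m → ℝ) (B : Fin q → Fin m → ℝ) (h : (Fin n → ℝ) → Fin q → ℝ)

theorem sol_eq_linProgSol (x : Fin n → ℝ) :
    Sol (fun _ y => ∑ j, c j * y j) (fun x y i => h x i + ∑ j, B i j * y j) x =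
      linProgSol (dotProductCLM c) (fun i => dotProductCLM (B i)) (-h x) := by
  have hfeasible (y : Fin m → ℝ) (i : Fin q) :
      h x i + ∑ j, B i j * y j ≤ 0 ↔ dotProductCLM (B i) y ≤ (-h x) i :=
    le_neg_iff_add_nonpos_left.symm
  simp only [Sol, linProgSol, hfeasible]
  rfl

theorem innerSemicontinuous_sol {xb : Fin n → ℝ} {yb : Fin m → ℝ} (hh : ContinuousAt h xb)
    (hyb : yb ∈ Sol (fun _ y => ∑ j, c j * y j) (fun x y i => h x i + ∑ j, B i j * y j) xb)
    (hxb : xb ∈ interior {x | (Sol (fun _ y => ∑ j, c j * y j)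
      (fun x y i => h x i + ∑ j, B i j * y j) x).Nonempty}) :
    InnerSemicontinuous
      (Sol (fun _ y => ∑ j, c j * y j) (fun x y i => h x i + ∑ j, B i j * y j)) xb yb := by
  obtain ⟨L, hL⟩ := linProgSol_lipschitz (dotProductCLM c) fun i => dotProductCLM (B i)
  have hρ : Tendsto (fun x => L * dist (-h xb) (-h x)) (𝓝 xb) (𝓝 0) := by
    have hdist : Tendsto (fun x => dist (-h xb) (-h x)) (𝓝 xb) (𝓝 (dist (-h xb) (-h xb))) :=
      tendsto_const_nhds.dist hh.neg
    simpa only [dist_self, mul_zero] using hdist.const_mul L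
  refine innerSemicontinuous_of_eventually_exists_dist_le hρ ?_
  filter_upwards [mem_interior_iff_mem_nhds.1 hxb] with x hx
  rw [sol_eq_linProgSol] at hyb ⊢
  exact hL _ _ yb hyb (sol_eq_linProgSol c B h x ▸ hx)

theorem rrcq_sol (xb : Fin n → ℝ) (yb : Fin m → ℝ) :
    RRCQ (fun _ y => ∑ j, c j * y j) (fun x y i => h x i + ∑ j, B i j * y j) xb yb := by
  obtain ⟨κ, hκ, hbound⟩ := linProgSol_errorBound (dotProductCLM c) fun i => dotProductCLM (B i)
  refine rrcq_of_errorBound hκ (fun x w hw y t ht hf hg => ?_) xb yb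
  rw [sol_eq_linProgSol] at hw ⊢
  exact hbound _ w hw y t ht hf fun i => le_neg_add_iff_add_le.2 (hg i)

theorem isc_and_rrcq_fully_linear_general {xb : Fin n → ℝ} {yb : Fin m → ℝ}
    (hh : ContinuousAt h xb)
    (hyb : yb ∈ Sol (fun _ y => ∑ j, c j * y j) (fun x y i => h x i + ∑ j, B i j * y j) xb)
    (hxb : xb ∈ interior {x | (Sol (fun _ y => ∑ j, c j * y j)
      (fun x y i => h x i + ∑ j, B i j * y j) x).Nonempty}) :
    InnerSemicontinuous
      (Sol (fun _ y => ∑ j, c j * y j) (fun x y i => h x i + ∑ j, B i j * y j)) xb yb ∧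
    RRCQ (fun _ y => ∑ j, c j * y j) (fun x y i => h x i + ∑ j, B i j * y j) xb yb :=
  ⟨innerSemicontinuous_sol c B h hh hyb hxb, rrcq_sol c B h xb yb⟩

end RightHandSide

/-- Remark 4.4: for a fully linear lower level problem `min_y { cᵀy | a + Dx + By ≤ 0 }`,
the solution map `S` is inner semicontinuous and RRCQ holds at every point `(x̄,ȳ)` of its
graph with `x̄` in the interior of `dom S`. -/
theorem isc_and_rrcq_fully_linear {n m q : ℕ}
    (c : Fin m → ℝ) (B : Fin q → Fin m → ℝ) (a : Fin q → ℝ) (D : Fin q → Fin n → ℝ) :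
    ∀ (xb : Fin n → ℝ) (yb : Fin m → ℝ),
      yb ∈ Sol (fun _ y => ∑ j, c j * y j)
        (fun x y i => a i + (∑ j, D i j * x j) + ∑ j, B i j * y j) xb →
      xb ∈ interior {x : Fin n → ℝ |
        (Sol (fun _ y => ∑ j, c j * y j)
          (fun x y i => a i + (∑ j, D i j * x j) + ∑ j, B i j * y j) x).Nonempty} →
      InnerSemicontinuous
        (Sol (fun _ y => ∑ j, c j * y j)
          (fun x y i => a i + (∑ j, D i j * x j) + ∑ j, B i j * y j)) xb yb ∧
      RRCQ (fun _ y => ∑ j, c j * y j)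
        (fun x y i => a i + (∑ j, D i j * x j) + ∑ j, B i j * y j) xb yb :=
  fun _ _ => isc_and_rrcq_fully_linear_general c B (fun x i => a i + ∑ j, D i j * x j)
    (Continuous.continuousAt (by fun_prop))
end
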